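/- For every real σ > 1, the sum over all nonzero ideals I of the ring of integers of ℚ(√5) of 1/(card(O_{ℚ(√5)}/I))^σ equals Σ_{i=1}^∞ 1/η_i^σ. Equivalently, the Dedekind zeta function of ℚ(√5) at σ satisfies ζ_{ℚ(√5)}(σ) = Σ_{i=1}^∞ η_i^{−σ}. -/

import Mathlib

open Real

noncomputable def phi : ℝ := (1 + Real.sqrt 5) / 2

noncomputable def W (i : ℕ) : ℕ → ℤ
  | 0 => ⌊phi ^ 2 * (⌊phi * i⌋ : ℝ)⌋ - ⌊phi * (⌊phi * i⌋ : ℝ)⌋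
  | 1 => ⌊phi * (⌊phi * i⌋ : ℝ)⌋
  | 2 => ⌊phi ^ 2 * (⌊phi * i⌋ : ℝ)⌋
  | (k + 3) => W i (k + 2) + W i (k + 1)

noncomputable def wplus (i : ℕ) : ℝ := phi⁻¹ ^ 2 * (W i 1 : ℝ) + phi⁻¹ * (W i 2 : ℝ)

noncomputable def wminus (i : ℕ) : ℝ := phi ^ 2 * (W i 1 : ℝ) - phi * (W i 2 : ℝ)

noncomputable def eta (i : ℕ) : ℝ := -(wplus i * wminus i)

/-!
By the division algorithm for the norm, `ℤ[φ]` is a principal ideal domain; being integrally closed,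
it is the full ring of integers of `ℚ(√5)`. The nonzero ideals are therefore the classes of nonzero
elements modulo the units `±φ ^ n`, and multiplying by a suitable unit moves each class to a unique
representative `a + b φ > 0` whose conjugate `a + b ψ` lies in `[-1, -ψ ^ 2)`. These inequalities
amount to `0 ≤ a` and `b = ⌊φ (a + 1)⌋`, so `a` and `b` are the two terms preceding row `a + 1` of
the Wythoff array. The two real embeddings of `a + b φ` are `w₊(a + 1)` and `w₋(a + 1)`, hence its
norm is `-η_{a + 1}`.
-/

open Module NumberField
open scoped goldenRatio QuadraticAlgebra

theorem isPrincipalIdealRing_of_exists_sub_mul_lt {R α : Type*} [Ring R] [LT α] [WellFoundedLT α]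
    (N : R → α) (h : ∀ x y : R, y ≠ 0 → ∃ q, x - q * y = 0 ∨ N (x - q * y) < N y) :
    IsPrincipalIdealRing R where
  principal I := by
    obtain rfl | hI := eq_or_ne I ⊥
    · exact bot_isPrincipal
    obtain ⟨y, ⟨hyI, hy0⟩, hmin⟩ := (InvImage.wf N wellFounded_lt).has_min
      {z | z ∈ I ∧ z ≠ 0} (Submodule.exists_mem_ne_zero_of_ne_bot hI)
    refine ⟨⟨y, le_antisymm (fun x hx ↦ ?_) ((Ideal.span_singleton_le_iff_mem I).mpr hyI)⟩⟩
    obtain ⟨q, hq⟩ := h x y hy0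
    have hr : x - q * y = 0 := by
      by_contra hr0
      exact hmin _ ⟨I.sub_mem hx (I.mul_mem_left q hyI), hr0⟩ (hq.resolve_left hr0)
    exact Ideal.mem_span_singleton'.mpr ⟨q, (sub_eq_zero.mp hr).symm⟩

theorem exists_two_mul_abs_sub_mul_le (m : ℤ) {n : ℤ} (hn : n ≠ 0) :
    ∃ q : ℤ, 2 * |m - q * n| ≤ |n| := by
  have hn' : (n : ℚ) ≠ 0 := mod_cast hn
  refine ⟨round (m / n : ℚ), ?_⟩
  have h : |(m - round (m / n : ℚ) * n : ℚ)| ≤ 1 / 2 * |(n : ℚ)| := by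
    rw [show (m - round (m / n : ℚ) * n : ℚ) = (m / n - round (m / n : ℚ)) * n by field_simp,
      abs_mul]
    gcongr
    exact abs_sub_round _
  have : 2 * |(m - round (m / n : ℚ) * n : ℚ)| ≤ |(n : ℚ)| := by linarith
  exact_mod_cast this

theorem exists_eq_add_mul_of_finrank_eq_two {F K : Type*} [Field F] [Field K] [Algebra F K]
    (hK : finrank F K = 2) {w : K} (hw : w ∉ Set.range (algebraMap F K)) (z : K) :
    ∃ p q : F, z = algebraMap F K p + algebraMap F K q * w := by
  have hli : LinearIndependent F ![1, w] := by
    refine (LinearIndependent.pair_iff' one_ne_zero).mpr fun r hr ↦ hw ⟨r, ?_⟩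
    rw [Algebra.algebraMap_eq_smul_one, hr]
  have hspan := hli.span_eq_top_of_card_eq_finrank (by simp [hK])
  have hz : z ∈ Submodule.span F (Set.range ![1, w]) := hspan ▸ Submodule.mem_top
  obtain ⟨q, p, rfl⟩ : ∃ q p : F, q • w + p • 1 = z := by
    simpa [Submodule.mem_span_pair] using hz
  exact ⟨p, q, by simp [Algebra.smul_def, add_comm]⟩

theorem isFractionRing_quadraticAlgebra {R F K : Type*} [CommRing R] [Field F] [Field K]
    [Algebra R F] [IsFractionRing R F] [Algebra F K] [Algebra R K] [IsScalarTower R F K]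
    {a b : R} [Algebra (QuadraticAlgebra R a b) K] [IsScalarTower R (QuadraticAlgebra R a b) K]
    [FaithfulSMul (QuadraticAlgebra R a b) K] (hK : finrank F K = 2) :
    IsFractionRing (QuadraticAlgebra R a b) K := by
  let ι := algebraMap (QuadraticAlgebra R a b) K
  have hR (r : R) : algebraMap F K (algebraMap R F r) = ι (algebraMap R _ r) := by
    rw [← IsScalarTower.algebraMap_apply, IsScalarTower.algebraMap_apply R (QuadraticAlgebra R a b)]
  have hinj : Function.Injective ι := FaithfulSMul.algebraMap_injective _ _
  have : Nontrivial R := (IsFractionRing.nontrivial_iff_nontrivial R F).mpr inferInstance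
  have hne {d : R} (hd : d ∈ nonZeroDivisors R) : ι (algebraMap R _ d) ≠ 0 := by
    rw [← hR]
    simpa using nonZeroDivisors.ne_zero hd
  have hω : ι ω ∉ Set.range (algebraMap F K) := by
    rintro ⟨r, hr⟩
    obtain ⟨n, d, hd, rfl⟩ := IsFractionRing.div_surjective (A := R) r
    have h : ι (algebraMap R _ d * ω) = ι (algebraMap R _ n) := by
      rw [map_mul, ← hr, map_div₀, hR, hR, mul_div_cancel₀ _ (hne hd)]
    have hd0 : d = 0 := by simpa using congrArg QuadraticAlgebra.im (hinj h)
    exact nonZeroDivisors.ne_zero hd hd0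
  refine IsFractionRing.of_field _ _ fun z ↦ ?_
  obtain ⟨p, q, rfl⟩ := exists_eq_add_mul_of_finrank_eq_two hK hω z
  obtain ⟨m, d, hd, rfl⟩ := IsFractionRing.div_surjective (A := R) p
  obtain ⟨n, e, he, rfl⟩ := IsFractionRing.div_surjective (A := R) q
  refine ⟨algebraMap R _ (m * e) + algebraMap R _ (d * n) * ω, algebraMap R _ (d * e), ?_⟩
  change _ = ι _ / ι _
  simp only [map_add, map_mul, map_div₀, hR]
  field_simp [hne hd, hne he]

/-- A quadratic order that is integrally closed is the full ring of integers. -/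
noncomputable def ringOfIntegersEquivQuadraticAlgebra {K : Type*} [Field K] [CharZero K] {a b : ℤ}
    [IsIntegrallyClosed (QuadraticAlgebra ℤ a b)] (hK : finrank ℚ K = 2)
    (f : QuadraticAlgebra ℤ a b →+* K) (hf : Function.Injective f) :
    𝓞 K ≃+* QuadraticAlgebra ℤ a b :=
  letI := f.toAlgebra
  haveI : FaithfulSMul (QuadraticAlgebra ℤ a b) K :=
    (faithfulSMul_iff_algebraMap_injective _ _).mpr hf
  haveI : IsFractionRing (QuadraticAlgebra ℤ a b) K := isFractionRing_quadraticAlgebra hK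
  RingOfIntegers.equiv (QuadraticAlgebra ℤ a b)

theorem algebraNorm_quadraticAlgebra {R : Type*} [CommRing R] {a b : R}
    (z : QuadraticAlgebra R a b) : Algebra.norm R z = z.norm := by
  rw [← QuadraticAlgebra.det_toLinearMap_eq_norm, Algebra.norm_apply]
  congr 1

theorem tsum_natCard_quotient_congr {R S M : Type*} [CommRing R] [CommRing S] [AddCommMonoid M]
    [TopologicalSpace M] (e : R ≃+* S) (f : ℕ → M) :
    ∑' I : {I : Ideal R // I ≠ ⊥}, f (Nat.card (R ⧸ (I : Ideal R))) =
      ∑' I : {I : Ideal S // I ≠ ⊥}, f (Nat.card (S ⧸ (I : Ideal S))) := by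
  let E : {I : Ideal S // I ≠ ⊥} ≃ {I : Ideal R // I ≠ ⊥} :=
    e.idealComapOrderIso.toEquiv.subtypeEquiv fun I ↦ (map_eq_bot_iff e.idealComapOrderIso).symm.not
  refine (E.tsum_eq _).symm.trans (tsum_congr fun I ↦ congrArg f (Nat.card_congr ?_))
  exact (Ideal.quotientEquiv _ _ e (Ideal.map_comap_of_surjective e e.surjective I).symm).toEquiv

theorem goldenRatio_sq_add_goldenConj_sq : φ ^ 2 + ψ ^ 2 = 3 := by
  rw [goldenRatio_sq, goldenConj_sq]
  linear_combination goldenRatio_add_goldenConj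

theorem goldenRatio_sq_mul_goldenConj_sq : φ ^ 2 * ψ ^ 2 = 1 := by
  rw [← mul_pow, goldenRatio_mul_goldenConj, neg_one_sq]

/-- The ring `ℤ[φ]`; the element `a + b φ` is `⟨a, b⟩`. -/
abbrev GoldenInt : Type := QuadraticAlgebra ℤ 1 1

namespace GoldenInt

/-- The real embedding `a + b φ ↦ a + b φ` of `ℤ[φ]`; the other one, `a + b φ ↦ a + b ψ`, is
`fun z ↦ val (star z)`. -/
noncomputable def val : GoldenInt →ₐ[ℤ] ℝ :=
  QuadraticAlgebra.lift ⟨φ, by simp [← sq, add_comm]⟩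

theorem val_apply (z : GoldenInt) : val z = z.re + z.im * φ := by
  simp [val]

theorem val_star (z : GoldenInt) : val (star z) = z.re + z.im * ψ := by
  rw [val_apply, ← one_sub_goldenRatio, QuadraticAlgebra.re_star, QuadraticAlgebra.im_star]
  push_cast
  ring

theorem val_mul_val_star (z : GoldenInt) : val z * val (star z) = z.norm := by
  rw [← map_mul, ← QuadraticAlgebra.algebraMap_norm_eq_mul_star]
  simp

theorem val_add_val_star (z : GoldenInt) : val z + val (star z) = QuadraticAlgebra.trace z := by
  rw [← map_add, ← QuadraticAlgebra.algebraMap_trace_eq_add_star]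
  simp

theorem val_injective : Function.Injective val := by
  refine (injective_iff_map_eq_zero val).mpr fun z hz ↦ ?_
  rw [val_apply] at hz
  have him : z.im = 0 := by
    by_contra him
    exact ((goldenRatio_irrational.intCast_mul him).intCast_add z.re).ne_zero hz
  have hre : z.re = 0 := by simpa [him] using hz
  exact QuadraticAlgebra.ext hre him

theorem val_ne_zero {z : GoldenInt} (hz : z ≠ 0) : val z ≠ 0 :=
  (map_ne_zero_iff val val_injective).mpr hz

theorem norm_ne_zero {z : GoldenInt} (hz : z ≠ 0) : z.norm ≠ 0 := by
  have h := mul_ne_zero (val_ne_zero hz) (val_ne_zero (star_ne_zero.mpr hz))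
  rw [val_mul_val_star] at h
  exact_mod_cast h

theorem injective_of_charZero {A : Type*} [Ring A] [CharZero A] (f : GoldenInt →+* A) :
    Function.Injective f := by
  refine (injective_iff_map_eq_zero f).mpr fun z hz ↦ ?_
  have h : f (algebraMap ℤ _ z.norm) = 0 := by
    rw [QuadraticAlgebra.algebraMap_norm_eq_mul_star, map_mul, hz, zero_mul]
  by_contra hz0
  exact norm_ne_zero hz0 (by simpa using h)

instance instIsDomain : IsDomain GoldenInt := val_injective.isDomain val

theorem exists_natAbs_norm_sub_mul_lt (x : GoldenInt) {y : GoldenInt} (hy : y ≠ 0) :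
    ∃ q : GoldenInt, (x - q * y).norm.natAbs < y.norm.natAbs := by
  set n := y.norm with hn
  have hn0 : 0 < |n| := abs_pos.mpr (norm_ne_zero hy)
  obtain ⟨p, hp⟩ := exists_two_mul_abs_sub_mul_le (x * star y).re (norm_ne_zero hy)
  obtain ⟨q, hq⟩ := exists_two_mul_abs_sub_mul_le (x * star y).im (norm_ne_zero hy)
  refine ⟨⟨p, q⟩, ?_⟩
  set r : GoldenInt := ⟨(x * star y).re - p * n, (x * star y).im - q * n⟩ with hr
  have hmul : (x - ⟨p, q⟩ * y) * star y = r := by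
    rw [sub_mul, mul_assoc, ← QuadraticAlgebra.algebraMap_norm_eq_mul_star]
    ext <;> simp [hr, hn]
  have hnorm : |(x - ⟨p, q⟩ * y).norm| * |n| = |r.re ^ 2 + r.re * r.im - r.im ^ 2| := by
    rw [hn, ← QuadraticAlgebra.norm_star y, ← abs_mul, ← map_mul, hmul, QuadraticAlgebra.norm_def]
    ring_nf
  have hbound : |r.re ^ 2 + r.re * r.im - r.im ^ 2| < |n| * |n| := by
    calc |r.re ^ 2 + r.re * r.im - r.im ^ 2|
        ≤ |r.re| ^ 2 + |r.re| * |r.im| + |r.im| ^ 2 := by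
          rw [← abs_pow, ← abs_pow, ← abs_mul]
          exact (abs_sub _ _).trans (by gcongr; exact abs_add_le _ _)
      _ < |n| * |n| := by nlinarith [abs_nonneg r.re, abs_nonneg r.im]
  zify
  exact lt_of_mul_lt_mul_right (hnorm ▸ hbound) hn0.le

instance instIsPrincipalIdealRing : IsPrincipalIdealRing GoldenInt :=
  isPrincipalIdealRing_of_exists_sub_mul_lt (fun z ↦ z.norm.natAbs) fun x _ hy ↦
    (exists_natAbs_norm_sub_mul_lt x hy).imp fun _ ↦ Or.inr

theorem natCard_quotient_span_singleton (z : GoldenInt) :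
    Nat.card (GoldenInt ⧸ Ideal.span {z}) = z.norm.natAbs := by
  rw [← Submodule.cardQuot_apply, ← Ideal.absNorm_apply, Ideal.absNorm_span_singleton,
    algebraNorm_quadraticAlgebra]

/-- The fundamental unit `φ` of `ℤ[φ]`. -/
def unitPhi : GoldenIntˣ where
  val := ⟨0, 1⟩
  inv := ⟨-1, 1⟩
  val_inv := by ext <;> rfl
  inv_val := by ext <;> rfl

theorem val_unitPhi : val unitPhi = φ := by
  simp [val_apply, unitPhi]

theorem val_star_unitPhi : val (star (unitPhi : GoldenInt)) = ψ := by
  rw [val_star]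
  simp [unitPhi]

/-- The fundamental domain for multiplication by units on `ℤ[φ] ∖ {0}` cut out by the signs and the
size of the two real embeddings; the two endpoints differ by the factor `ψ ^ 2`. -/
def IsReduced (z : GoldenInt) : Prop :=
  0 < val z ∧ val (star z) ∈ Set.Ico (-1) (-ψ ^ 2)

theorem val_unit_mul_val_star {u : GoldenIntˣ} (h : 0 < val u * val (star (u : GoldenInt))) :
    val u * val (star (u : GoldenInt)) = 1 := by
  rw [val_mul_val_star] at h ⊢
  have hu : IsUnit (u : GoldenInt).norm := QuadraticAlgebra.isUnit_iff_norm_isUnit.mp u.isUnit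
  obtain hu | hu := Int.isUnit_iff.mp hu
  · simp [hu]
  · norm_num [hu] at h

-- The trace `x + x⁻¹` of `u` is an integer in `[2, 3)`, and `x + x⁻¹ = 3` at `x = φ ^ 2, ψ ^ 2`.
theorem unit_eq_one_of_mem_Ioo {u : GoldenIntˣ} (hpos : 0 < val u)
    (hmem : val (star (u : GoldenInt)) ∈ Set.Ioo (ψ ^ 2) (φ ^ 2)) : u = 1 := by
  set x := val u
  set y := val (star (u : GoldenInt))
  have hy : 0 < y := (sq_nonneg ψ).trans_lt hmem.1
  have hxy : x * y = 1 := val_unit_mul_val_star (mul_pos hpos hy)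
  have hlt : x + y < 3 := by
    have h : (y - ψ ^ 2) * (φ ^ 2 - y) = (3 - (x + y)) * y := by
      linear_combination
        y * goldenRatio_sq_add_goldenConj_sq - goldenRatio_sq_mul_goldenConj_sq + hxy
    have h' := mul_pos (sub_pos.mpr hmem.1) (sub_pos.mpr hmem.2)
    rw [h] at h'
    linarith [pos_of_mul_pos_left h' hy.le]
  have hge : 2 ≤ x + y := by nlinarith [sq_nonneg (x - y)]
  have htrace : x + y = 2 := by
    rw [val_add_val_star] at hlt hge ⊢
    norm_cast at hlt hge ⊢
    omega
  have hx : x = 1 := by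
    have : (x - 1) ^ 2 = 0 := by nlinarith
    linarith [pow_eq_zero_iff two_ne_zero |>.mp this]
  exact Units.ext (val_injective (hx.trans (map_one val).symm))

theorem IsReduced.eq_of_associated {z w : GoldenInt} (hz : IsReduced z) (hw : IsReduced w)
    (h : Associated z w) : z = w := by
  obtain ⟨u, rfl⟩ := h
  obtain ⟨hz0, hz1, hz2⟩ := hz
  obtain ⟨hw0, hw1, hw2⟩ := hw
  rw [map_mul] at hw0
  rw [star_mul', map_mul] at hw1 hw2
  have hφψ := goldenRatio_sq_mul_goldenConj_sq
  have hφ : 0 < φ ^ 2 := by positivity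
  have hu : u = 1 := unit_eq_one_of_mem_Ioo (pos_of_mul_pos_right hw0 hz0.le)
    ⟨by nlinarith, by nlinarith⟩
  simp [hu]

theorem val_star_unitPhi_zpow (n : ℤ) :
    val (star ((unitPhi ^ n : GoldenIntˣ) : GoldenInt)) = ψ ^ n := by
  let f : GoldenInt →* ℝ := (val : GoldenInt →* ℝ).comp (starRingEnd GoldenInt)
  have h := congrArg Units.val (map_zpow (Units.map f) unitPhi n)
  rw [Units.val_zpow_eq_zpow_val] at h
  rw [← val_star_unitPhi]
  exact h

theorem exists_mul_zpow_sq_mem_Ico {x : ℝ} (hx : x < 0) :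
    ∃ n : ℤ, x * (ψ ^ n) ^ 2 ∈ Set.Ico (-1) (-ψ ^ 2) := by
  have hψ : 0 < ψ ^ 2 := sq_pos_of_neg goldenConj_neg
  have hinv : φ ^ 2 = (ψ ^ 2)⁻¹ := eq_inv_of_mul_eq_one_left goldenRatio_sq_mul_goldenConj_sq
  obtain ⟨n, hlt, hle⟩ :=
    exists_mem_Ioc_zpow (neg_pos.mpr hx) (one_lt_pow₀ one_lt_goldenRatio two_ne_zero)
  rw [hinv, inv_zpow, inv_lt_iff_one_lt_mul₀ (by positivity)] at hlt
  rw [hinv, inv_zpow, le_inv_comm₀ (neg_pos.mpr hx) (by positivity), ← one_div,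
    le_div_iff₀ (neg_pos.mpr hx)] at hle
  have hcomm : (ψ ^ (n + 1)) ^ 2 = (ψ ^ 2) ^ (n + 1) := mod_cast zpow_comm ψ (n + 1) 2
  refine ⟨n + 1, ?_⟩
  rw [hcomm]
  refine ⟨by linarith, ?_⟩
  rw [zpow_add_one₀ hψ.ne']
  nlinarith

theorem exists_associated_val_pos {z : GoldenInt} (hz : z ≠ 0) :
    ∃ w, Associated w z ∧ 0 < val w := by
  obtain h | h := (val_ne_zero hz).lt_or_gt
  · exact ⟨-z, (Associated.refl z).neg_left, by simpa using h⟩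
  · exact ⟨z, Associated.refl z, h⟩

theorem exists_associated_val_pos_val_star_neg {z : GoldenInt} (hz : z ≠ 0) :
    ∃ w, Associated w z ∧ 0 < val w ∧ val (star w) < 0 := by
  obtain ⟨w, hwz, hw⟩ := exists_associated_val_pos hz
  have hw0 : w ≠ 0 := hwz.ne_zero_iff.mpr hz
  obtain h | h := (val_ne_zero (star_ne_zero.mpr hw0)).lt_or_gt
  · exact ⟨w, hwz, hw, h⟩
  · refine ⟨w * unitPhi, (associated_mul_unit_left w _ unitPhi.isUnit).trans hwz, ?_, ?_⟩
    · rw [map_mul, val_unitPhi]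
      exact mul_pos hw goldenRatio_pos
    · rw [star_mul', map_mul, val_star_unitPhi]
      exact mul_neg_of_pos_of_neg h goldenConj_neg

theorem exists_isReduced_associated {z : GoldenInt} (hz : z ≠ 0) :
    ∃ w, IsReduced w ∧ Associated w z := by
  obtain ⟨w, hwz, hw, hw'⟩ := exists_associated_val_pos_val_star_neg hz
  obtain ⟨n, hn⟩ := exists_mul_zpow_sq_mem_Ico hw'
  refine ⟨w * ↑((unitPhi ^ n) ^ 2), ⟨?_, ?_⟩,
    (associated_mul_unit_left w _ (Units.isUnit _)).trans hwz⟩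
  · rw [map_mul, Units.val_pow_eq_pow_val, map_pow]
    have := val_ne_zero (unitPhi ^ n).ne_zero
    positivity
  · rwa [star_mul', map_mul, Units.val_pow_eq_pow_val, star_pow, map_pow, val_star_unitPhi_zpow]

theorem val_star_eq_sub (z : GoldenInt) : val (star z) = z.re + z.im - φ * z.im := by
  rw [val_star, ← one_sub_goldenConj]
  ring

theorem val_star_mem_Ico_iff (z : GoldenInt) :
    val (star z) ∈ Set.Ico (-1) (-ψ ^ 2) ↔ ⌊φ * (z.re + 1)⌋ = z.im := by
  have hφ := goldenRatio_pos
  have hψ : φ * ψ = -1 := goldenRatio_mul_goldenConj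
  have hl : φ * (val (star z) + 1) = φ * (z.re + 1) - z.im := by
    rw [val_star]
    linear_combination (z.im : ℝ) * hψ
  have hr : φ * (-ψ ^ 2 - val (star z)) = z.im + 1 - φ * (z.re + 1) := by
    rw [val_star]
    linear_combination -φ * goldenConj_sq - (1 + (z.im : ℝ)) * hψ
  rw [Set.mem_Ico, Int.floor_eq_iff]
  refine and_congr ?_ ?_
  · rw [← sub_nonneg, sub_neg_eq_add, ← mul_nonneg_iff_of_pos_left hφ, hl, sub_nonneg]
  · rw [← sub_pos, ← mul_pos_iff_of_pos_left hφ, hr, sub_pos]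

theorem isReduced_iff (z : GoldenInt) : IsReduced z ↔ 0 ≤ z.re ∧ ⌊φ * (z.re + 1)⌋ = z.im := by
  rw [IsReduced, val_star_mem_Ico_iff, val_apply]
  refine and_congr_left fun hfloor ↦ ?_
  have hφ := one_lt_goldenRatio
  have hle := (Int.floor_eq_iff.mp hfloor).1
  constructor <;> intro h
  · by_contra! hre
    have hre' : (z.re : ℝ) + 1 ≤ 0 := mod_cast hre
    have him : (z.im : ℝ) ≤ 0 :=
      hle.trans (mul_nonpos_of_nonneg_of_nonpos goldenRatio_pos.le hre')
    nlinarith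
  · have hre : (0 : ℝ) ≤ z.re := mod_cast h
    have him : (1 : ℝ) ≤ z.im := by
      rw [← hfloor]
      exact_mod_cast Int.le_floor.mpr (by push_cast; nlinarith)
    nlinarith

/-- The element `W_{j,-1} + W_{j,0} φ = φ⁻² (W_{j,1} + W_{j,2} φ)` of `ℤ[φ]` attached to the row
`j = i + 1` of the Wythoff array. -/
noncomputable def wythoffElement (i : ℕ) : GoldenInt :=
  ⟨i, ⌊φ * (i + 1)⌋⟩

theorem isReduced_wythoffElement (i : ℕ) : IsReduced (wythoffElement i) := by
  simp [isReduced_iff, wythoffElement]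

theorem IsReduced.exists_wythoffElement_eq {z : GoldenInt} (hz : IsReduced z) :
    ∃ i, wythoffElement i = z := by
  obtain ⟨hre, him⟩ := (isReduced_iff z).mp hz
  lift z.re to ℕ using hre with i hi
  exact ⟨i, QuadraticAlgebra.ext hi (by simpa [wythoffElement] using him)⟩

theorem wythoffElement_injective : Function.Injective wythoffElement := fun i j h ↦ by
  simpa [wythoffElement] using congrArg QuadraticAlgebra.re h

theorem IsReduced.neg_one_lt_val_star {z : GoldenInt} (hz : IsReduced z) : -1 < val (star z) := by
  refine hz.2.1.lt_of_ne fun h ↦ ?_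
  have hstar : star z = -1 := val_injective (by simpa using h.symm)
  have hz1 : z = -1 := by rw [← star_star z, hstar, star_neg, star_one]
  have hpos : 0 < val (-1) := hz1 ▸ hz.1
  rw [map_neg, map_one] at hpos
  linarith

theorem IsReduced.val_star_neg {z : GoldenInt} (hz : IsReduced z) : val (star z) < 0 :=
  hz.2.2.trans_le (neg_nonpos.mpr (sq_nonneg ψ))

theorem IsReduced.ne_zero {z : GoldenInt} (hz : IsReduced z) : z ≠ 0 := by
  rintro rfl
  simpa using hz.1

theorem IsReduced.floor_goldenRatio_mul_im {z : GoldenInt} (hz : IsReduced z) :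
    ⌊φ * z.im⌋ = z.re + z.im := by
  have h := val_star_eq_sub z
  rw [Int.floor_eq_iff]
  push_cast
  constructor <;> linarith [hz.neg_one_lt_val_star, hz.val_star_neg]

theorem IsReduced.floor_goldenRatio_sq_mul_im {z : GoldenInt} (hz : IsReduced z) :
    ⌊φ ^ 2 * z.im⌋ = z.re + 2 * z.im := by
  rw [goldenRatio_sq, add_mul, one_mul, Int.floor_add_intCast, hz.floor_goldenRatio_mul_im]
  ring

theorem phi_eq_goldenRatio : phi = φ := rfl

theorem floor_phi_mul_succ (i : ℕ) : ⌊phi * (i + 1 : ℕ)⌋ = (wythoffElement i).im := by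
  simp [wythoffElement, phi_eq_goldenRatio]

theorem W_one (i : ℕ) : W (i + 1) 1 = (wythoffElement i).re + (wythoffElement i).im := by
  rw [W, floor_phi_mul_succ, phi_eq_goldenRatio,
    (isReduced_wythoffElement i).floor_goldenRatio_mul_im]

theorem W_two (i : ℕ) : W (i + 1) 2 = (wythoffElement i).re + 2 * (wythoffElement i).im := by
  rw [W, floor_phi_mul_succ, phi_eq_goldenRatio,
    (isReduced_wythoffElement i).floor_goldenRatio_sq_mul_im]

theorem wplus_succ (i : ℕ) : wplus (i + 1) = val (wythoffElement i) := by
  rw [wplus, W_one, W_two, phi_eq_goldenRatio, inv_goldenRatio, val_apply]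
  push_cast
  linear_combination ((wythoffElement i).re + (wythoffElement i).im : ℝ) * goldenConj_sq -
    ((wythoffElement i).im : ℝ) * goldenRatio_add_goldenConj

theorem wminus_succ (i : ℕ) : wminus (i + 1) = val (star (wythoffElement i)) := by
  rw [wminus, W_one, W_two, phi_eq_goldenRatio, val_star]
  push_cast
  linear_combination ((wythoffElement i).re + (wythoffElement i).im : ℝ) * goldenRatio_sq -
    ((wythoffElement i).im : ℝ) * goldenRatio_add_goldenConj

theorem eta_succ (i : ℕ) : eta (i + 1) = (wythoffElement i).norm.natAbs := by
  have hneg := mul_neg_of_pos_of_neg (isReduced_wythoffElement i).1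
    (isReduced_wythoffElement i).val_star_neg
  rw [eta, wplus_succ, wminus_succ, Nat.cast_natAbs, Int.cast_abs, ← val_mul_val_star,
    abs_of_neg hneg]

/-- The nonzero ideal of `ℤ[φ]` generated by `W_{j,1} + W_{j,2} φ`, where `j = i + 1`; the generator
`wythoffElement i` is an associate of this element. -/
noncomputable def wythoffIdeal (i : ℕ) : {I : Ideal GoldenInt // I ≠ ⊥} :=
  ⟨Ideal.span {wythoffElement i},
    Ideal.span_singleton_eq_bot.not.mpr (isReduced_wythoffElement i).ne_zero⟩

theorem natCard_quotient_wythoffIdeal (i : ℕ) :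
    (Nat.card (GoldenInt ⧸ (wythoffIdeal i : Ideal GoldenInt)) : ℝ) = eta (i + 1) := by
  rw [eta_succ, ← natCard_quotient_span_singleton, wythoffIdeal]

theorem wythoffIdeal_bijective : Function.Bijective wythoffIdeal := by
  constructor
  · intro i j hij
    have h := Ideal.span_singleton_eq_span_singleton.mp (congrArg Subtype.val hij)
    exact wythoffElement_injective
      ((isReduced_wythoffElement i).eq_of_associated (isReduced_wythoffElement j) h)
  · rintro ⟨I, hI⟩
    obtain ⟨z, rfl⟩ := (IsPrincipalIdealRing.principal I).principal
    obtain ⟨w, hw, hwz⟩ := exists_isReduced_associated (Ideal.span_singleton_eq_bot.not.mp hI)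
    obtain ⟨i, rfl⟩ := hw.exists_wythoffElement_eq
    exact ⟨i, Subtype.ext (Ideal.span_singleton_eq_span_singleton.mpr hwz)⟩

theorem tsum_natCard_quotient_eq_tsum_eta {M : Type*} [AddCommMonoid M] [TopologicalSpace M]
    (f : ℝ → M) :
    ∑' I : {I : Ideal GoldenInt // I ≠ ⊥}, f (Nat.card (GoldenInt ⧸ (I : Ideal GoldenInt))) =
      ∑' i, f (eta (i + 1)) := by
  rw [← (Equiv.ofBijective _ wythoffIdeal_bijective).tsum_eq]
  exact tsum_congr fun i ↦ congrArg f (natCard_quotient_wythoffIdeal i)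

theorem nonempty_ringEquiv_ringOfIntegers {K : Type*} [Field K] [CharZero K]
    (hK : finrank ℚ K = 2) {x : K} (hx : x ^ 2 = 5) : Nonempty (𝓞 K ≃+* GoldenInt) := by
  let f : GoldenInt →ₐ[ℤ] K :=
    QuadraticAlgebra.lift ⟨(1 + x) / 2, by simp only [one_smul]; linear_combination hx / 4⟩
  exact ⟨ringOfIntegersEquivQuadraticAlgebra hK f.toRingHom (injective_of_charZero _)⟩

end GoldenInt

/-- The Dedekind zeta function of `ℚ(√5)` equals `Σ_{i≥1} η_i^{−σ}` for `σ > 1`. -/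
theorem dedekind_zeta_eq_sum_eta
    (K : Type*) [Field K] [NumberField K]
    (hdeg : Module.finrank ℚ K = 2) (hsqrt : ∃ x : K, x ^ 2 = 5)
    (σ : ℝ) (hσ : 1 < σ) :
    ∑' I : {I : Ideal (NumberField.RingOfIntegers K) // I ≠ ⊥},
        1 / (Nat.card (NumberField.RingOfIntegers K ⧸ (I : Ideal (NumberField.RingOfIntegers K))) : ℝ) ^ σ
      = ∑' i : ℕ, 1 / eta (i + 1) ^ σ := by
  obtain ⟨x, hx⟩ := hsqrt
  obtain ⟨e⟩ := GoldenInt.nonempty_ringEquiv_ringOfIntegers hdeg hx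
  exact (tsum_natCard_quotient_congr e fun n ↦ 1 / (n : ℝ) ^ σ).trans
    (GoldenInt.tsum_natCard_quotient_eq_tsum_eta fun y ↦ 1 / y ^ σ)
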